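/- Let r,q ≥ 1 with rq > 1. Form the pointed connection digraph of σ_{rq}: its vertices are all labels L^j_k with L ∈ {A,B}, 0 ≤ j ≤ r, 0 ≤ k ≤ q, including the formal vertex ⋆ = A^0_0; edges between genuine labels are those of the connection digraph of σ_{rq} (transported via meander positions), and additionally there is an edge v → ⋆ from every genuine vertex v of Morse number 0. Then the involution R defined by R(A^j_k) = B^{r−j}_{q−k} and R(B^j_k) = A^{r−j}_{q−k} is an edge-reversing automorphism: for all vertices u,v, there is an edge u → v if and only if there is an edge R(v) → R(u). In particular, the pointed connection graph is time-reversible. -/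

import Mathlib

/-- Morse numbers `i_j` of a permutation `σ` of `{1,…,N}` (extended to `ℕ`),
via the recursion `i_1 = 0`,
`i_{j+1} = i_j + (-1)^(j+1) * sign (σ⁻¹(j+1) - σ⁻¹(j))`. -/
def morse (σ : Equiv.Perm ℕ) : ℕ → ℤ
  | 0 => 0
  | 1 => 0
  | (j+2) => morse σ (j+1) +
      (-1)^(j+2) * Int.sign ((σ.symm (j+2) : ℤ) - (σ.symm (j+1) : ℤ))

/-- Zero numbers `z_{j k}`, recursion in the first index `j`, second index `k` fixed:
`z_{1k} = 0`, `z_{kk} = i_k`, `z_{k+1,k} = min (i_k, i_{k+1})`, and otherwise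
`z_{j+1,k} = z_{jk} + ((-1)^(j+1)/2) * (sign (σ⁻¹(j+1) - σ⁻¹(k)) - sign (σ⁻¹(j) - σ⁻¹(k)))`. -/
def zrec (σ : Equiv.Perm ℕ) (k : ℕ) : ℕ → ℤ
  | 0 => 0
  | 1 => 0
  | (j+2) =>
      if j+2 = k then morse σ k
      else if j+1 = k then min (morse σ k) (morse σ (k+1))
      else zrec σ k (j+1) +
        ((-1)^(j+2) * (Int.sign ((σ.symm (j+2) : ℤ) - (σ.symm k : ℤ))
          - Int.sign ((σ.symm (j+1) : ℤ) - (σ.symm k : ℤ)))) / 2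

/-- The zero number `z_{m n}`. -/
def zfun (σ : Equiv.Perm ℕ) (m n : ℕ) : ℤ := zrec σ n m

/-- The connection digraph of a dissipative Morse permutation `σ` of `{1,…,N}`:
an edge `m ⤳ n` iff `i_m = i_n + 1` and no `w` strictly between `m` and `n`
blocks, i.e. satisfies `z_{mw} = z_{wn} = z_{mn}`. -/
def hasEdge (N : ℕ) (σ : Equiv.Perm ℕ) (m n : ℕ) : Prop :=
  1 ≤ m ∧ m ≤ N ∧ 1 ≤ n ∧ n ≤ N ∧
  morse σ m = morse σ n + 1 ∧
  ¬ ∃ w : ℕ, min m n < w ∧ w < max m n ∧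
      zfun σ m w = zfun σ w n ∧ zfun σ w n = zfun σ m n

/-- A dissipative permutation of `{1,…,N}`. -/
def Dissipative (N : ℕ) (σ : Equiv.Perm ℕ) : Prop :=
  Set.BijOn σ (Set.Icc 1 N) (Set.Icc 1 N) ∧ σ 1 = 1 ∧ σ N = N

/-- The Morse property: all Morse numbers are nonnegative. -/
def MorseProp (N : ℕ) (σ : Equiv.Perm ℕ) : Prop :=
  ∀ j, 1 ≤ j → j ≤ N → 0 ≤ morse σ j

/-- Morse counts `μ(i) = #{j ∈ {1,…,N} : i_j = i}`. -/
def morseCount (N : ℕ) (σ : Equiv.Perm ℕ) (i : ℤ) : ℕ :=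
  ((Finset.Icc 1 N).filter (fun j => morse σ j = i)).card

/-- The primitive 3-nose permutation `σ_{rq}` of `{1,…,N}`, `N = 2(r+1)(q+1)-1`,
characterized by its defining relations, extended to a permutation of `ℕ`
fixing everything outside `{1,…,N}`. -/
def SigmaRQ (r q : ℕ) (σ : Equiv.Perm ℕ) : Prop :=
  (∀ a, a ∉ Set.Icc 1 (2*(r+1)*(q+1) - 1) → σ a = a) ∧
  (∀ j k, j ≤ r → k ≤ q →
    σ (2*((q+1)*j+k)+1) = 2*(j+(r+1)*k)+1) ∧
  (∀ j k, j ≤ r → k ≤ q → ¬(j = 0 ∧ k = 0) →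
    σ (2*((q+1)*(r-j)+(q-k)+1)) = 2*(j+(r+1)*k))

/-- Tags `A`, `B` of equilibrium labels `A^j_k`, `B^j_k`. -/
inductive Tag | A | B
deriving DecidableEq

/-- The axis position (`h_1`-position) of the label `L^j_k` for parameters `(r,q)`. -/
def axisPos (r q : ℕ) : Tag → ℕ → ℕ → ℕ
  | Tag.A, j, k => if Odd j then (q+1)*(j-1)+k+1 else (q+1)*(2*r+1-j)+(q-k)+1
  | Tag.B, j, k => if Odd j then (q+1)*j+(q-k)+1 else (q+1)*(2*r-j)+k+1

/-- The meander position (`h_0`-position) of the label `L^j_k` for parameters `(r,q)`. -/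
def meanderPos (r q : ℕ) : Tag → ℕ → ℕ → ℕ
  | Tag.A, j, k => if Odd k then (r+1)*(2*q+1-k)+(2*r+1-j) else (r+1)*k+j
  | Tag.B, j, k => if Odd k then (r+1)*(2*q+1-k)+j else (r+1)*(k+1)+(r-j)

/-- The suspension `σ̃` of a dissipative permutation `σ` of `{1,…,N}`:
`σ̃(1) = 1`, `σ̃(N+2) = N+2`, and `σ̃(a+1) = N+2 - σ(a)` for `1 ≤ a ≤ N`. -/
def IsSuspension (N : ℕ) (σ σt : Equiv.Perm ℕ) : Prop :=
  σt 1 = 1 ∧ σt (N+2) = N+2 ∧ ∀ a, 1 ≤ a → a ≤ N → σt (a+1) = N+2 - σ a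

/-- The label `A^0_0` is the distinguished (formal) vertex `⋆`. -/
def IsStar (L : Tag) (j k : ℕ) : Prop := L = Tag.A ∧ j = 0 ∧ k = 0

/-- Tag swap `A ↔ B`, used by the reversor. -/
def tagSwap : Tag → Tag
  | Tag.A => Tag.B
  | Tag.B => Tag.A

/-- Edges of the pointed connection digraph of `σ_{rq}` on labels, including
the distinguished vertex `⋆ = A^0_0`: edges between genuine labels are those of
the connection digraph (via meander positions), plus an edge `v → ⋆` from every
genuine vertex `v` of Morse number `0`. -/
def PEdge (r q : ℕ) (σ : Equiv.Perm ℕ) (L : Tag) (j k : ℕ)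
    (L' : Tag) (j' k' : ℕ) : Prop :=
  (¬ IsStar L j k ∧ ¬ IsStar L' j' k' ∧
    hasEdge (2*(r+1)*(q+1)-1) σ
      (σ (axisPos r q L j k)) (σ (axisPos r q L' j' k'))) ∨
  (¬ IsStar L j k ∧ IsStar L' j' k' ∧ morse σ (σ (axisPos r q L j k)) = 0)

/-!
A label `L^j_k` sits on the axis in a strand `A^j_0, …, A^j_q, B^j_q, …, B^j_0`. The strands with
odd `j` form an arm that starts at the left end, those with even `j` an arm that starts at the right
end, and the two arms face each other. The meander is a mirror image of this, with `j` and `k`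
exchanged. Following the meander step by step, only the relative position on the axis matters, and
the recursions for the Morse numbers and the zero numbers are solved by formulas that depend on
neither `r` nor `q` and are linear up to minima. They show that `u → v` holds exactly when the Morse
number drops by one and `u`, `v` share an upper or a lower index; here `⋆` counts as having Morse
number `-1`. The involution `R` turns a Morse number `i` into `r + q - 1 - i` and preserves equality
of indices, so it reverses all edges.
-/

namespace ThreeNose

/-- A label `L^j_k`. -/
structure Label where
  tag : Tag
  j : ℕ
  k : ℕ

namespace Label

/-- The formal vertex `⋆ = A^0_0`. -/
def star : Label := ⟨Tag.A, 0, 0⟩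

/-- The label `L^j_k` occurs for the parameters `(r, q)`. -/
def InRange (r q : ℕ) (u : Label) : Prop := u.j ≤ r ∧ u.k ≤ q

/-- Exchange of the indices `j` and `k`. It exchanges the roles of `(axis, r)` and
`(meander, q)`, up to a reflection of the line. -/
def transpose (u : Label) : Label := ⟨u.tag, u.k, u.j⟩

/-- The axis position of a label. -/
def axis (r q : ℕ) (u : Label) : ℕ := axisPos r q u.tag u.j u.k

/-- The meander position of a label; that of `⋆` is `0`. -/
def meander (r q : ℕ) (u : Label) : ℕ := meanderPos r q u.tag u.j u.k

/-- The coordinate of `L^j_k` in its strand `A^j_0, …, A^j_n, B^j_n, …, B^j_0`. -/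
def strandCoord (n : ℕ) : Label → ℕ
  | ⟨Tag.A, _, k⟩ => k
  | ⟨Tag.B, _, k⟩ => 2 * n + 1 - k

/-- The distance of a label from the outer end of its arm. An arm consists of the strands whose
index `j` has a given parity, in the order of `j`. -/
def depth (n : ℕ) (u : Label) : ℕ := (2 * n + 2) * (u.j / 2) + u.strandCoord n

/-- `v` lies on the inner side of `u` when two arms are laid out on a line with their inner ends
facing each other. -/
def Encloses (n : ℕ) (u v : Label) : Prop :=
  u.j % 2 ≠ v.j % 2 ∨ u.j < v.j ∨ u.j = v.j ∧ u.strandCoord n < v.strandCoord n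

instance (n : ℕ) (u v : Label) : Decidable (u.Encloses n v) :=
  inferInstanceAs (Decidable (_ ∨ _ ∨ _ ∧ _))

section Positions

variable {r q n m : ℕ} {u v w : Label}

lemma strandCoord_lt (hu : u.k ≤ n) : u.strandCoord n < 2 * n + 2 := by
  rcases u with ⟨_ | _, j, k⟩ <;> simp only [strandCoord] at * <;> omega

lemma axis_of_odd (h : u.j % 2 = 1) (hu : u.InRange r q) : u.axis r q = u.depth q + 1 := by
  obtain ⟨t, j, k⟩ := u
  obtain ⟨i, rfl⟩ : ∃ i, j = 2 * i + 1 := ⟨j / 2, by simp only at h; omega⟩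
  obtain ⟨q', rfl⟩ := Nat.exists_eq_add_of_le hu.2
  have half : (2 * i + 1) / 2 = i := by omega
  cases t <;> simp only [axis, axisPos, depth, strandCoord, Nat.odd_iff, h, if_true, half]
  · simp only [add_tsub_cancel_right]; ring
  · rw [show k + q' - k = q' by omega, show 2 * (k + q') + 1 - k = k + 2 * q' + 1 by omega]; ring

lemma axis_add_depth (h : u.j % 2 = 0) (hu : u.InRange r q) :
    u.axis r q + u.depth q = 2 * (r + 1) * (q + 1) := by
  obtain ⟨t, j, k⟩ := u
  obtain ⟨i, rfl⟩ : ∃ i, j = 2 * i := ⟨j / 2, by simp only at h; omega⟩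
  obtain ⟨r', rfl⟩ := Nat.exists_eq_add_of_le hu.1
  obtain ⟨q', rfl⟩ := Nat.exists_eq_add_of_le hu.2
  have half : 2 * i / 2 = i := by omega
  cases t <;> simp only [axis, axisPos, depth, strandCoord, Nat.odd_iff, h, zero_ne_one, if_false,
    half, add_tsub_cancel_left]
  · rw [show 2 * (2 * i + r') + 1 - 2 * i = 2 * i + 2 * r' + 1 by omega]; ring
  · rw [show 2 * (2 * i + r') - 2 * i = 2 * i + 2 * r' by omega,
      show 2 * (k + q') + 1 - k = k + 2 * q' + 1 by omega]; ring

lemma meander_of_even (h : u.k % 2 = 0) (hu : u.InRange r q) :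
    u.meander r q = u.transpose.depth r := by
  obtain ⟨t, j, k⟩ := u
  obtain ⟨i, rfl⟩ : ∃ i, k = 2 * i := ⟨k / 2, by simp only at h; omega⟩
  obtain ⟨r', rfl⟩ := Nat.exists_eq_add_of_le hu.1
  have half : 2 * i / 2 = i := by omega
  cases t <;> simp only [meander, meanderPos, depth, transpose, strandCoord, Nat.odd_iff, h,
    zero_ne_one, if_false, half, add_tsub_cancel_left]
  · ring
  · rw [show 2 * (j + r') + 1 - j = j + 2 * r' + 1 by omega]; ring

lemma meander_add_depth (h : u.k % 2 = 1) (hu : u.InRange r q) :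
    u.meander r q + u.transpose.depth r + 1 = 2 * (r + 1) * (q + 1) := by
  obtain ⟨t, j, k⟩ := u
  obtain ⟨i, rfl⟩ : ∃ i, k = 2 * i + 1 := ⟨k / 2, by simp only at h; omega⟩
  obtain ⟨r', rfl⟩ := Nat.exists_eq_add_of_le hu.1
  obtain ⟨q', rfl⟩ := Nat.exists_eq_add_of_le hu.2
  have half : (2 * i + 1) / 2 = i := by omega
  cases t <;> simp only [meander, meanderPos, depth, transpose, strandCoord, Nat.odd_iff, h,
    if_true, half]
  · rw [show 2 * (2 * i + 1 + q') + 1 - (2 * i + 1) = 2 * i + 2 * q' + 2 by omega,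
      show 2 * (j + r') + 1 - j = j + 2 * r' + 1 by omega]; ring
  · rw [show 2 * (2 * i + 1 + q') + 1 - (2 * i + 1) = 2 * i + 2 * q' + 2 by omega,
      show 2 * (j + r') + 1 - j = j + 2 * r' + 1 by omega]; ring

lemma depth_lt_depth_iff (h : u.j % 2 = v.j % 2) (hu : u.k ≤ n) (hv : v.k ≤ n) :
    u.depth n < v.depth n ↔ u.Encloses n v := by
  have hu' := strandCoord_lt hu
  have hv' := strandCoord_lt hv
  unfold depth Encloses
  rcases lt_trichotomy (u.j / 2) (v.j / 2) with hlt | heq | hlt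
  · have := Nat.mul_le_mul_left (2 * n + 2) (Nat.succ_le_of_lt hlt)
    rw [Nat.mul_succ] at this
    omega
  · rw [heq]
    omega
  · have := Nat.mul_le_mul_left (2 * n + 2) (Nat.succ_le_of_lt hlt)
    rw [Nat.mul_succ] at this
    omega

lemma depth_lt (hj : u.j ≤ m) (hk : u.k ≤ n) : u.depth n < 2 * (m + 1) * (n + 1) := by
  have := strandCoord_lt hk
  have := Nat.mul_le_mul_left (2 * n + 2) (show u.j / 2 + 1 ≤ m + 1 by omega)
  unfold depth
  linarith

lemma depth_add_depth_lt (h : u.j % 2 ≠ v.j % 2) (hu : u.j ≤ m) (hv : v.j ≤ m)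
    (hu' : u.k ≤ n) (hv' : v.k ≤ n) : u.depth n + v.depth n + 1 < 2 * (m + 1) * (n + 1) := by
  have := strandCoord_lt hu'
  have := strandCoord_lt hv'
  have := Nat.mul_le_mul_left (2 * n + 2) (show u.j / 2 + v.j / 2 + 2 ≤ m + 1 by omega)
  unfold depth
  linarith

lemma axis_lt_axis_iff (hu : u.InRange r q) (hv : v.InRange r q) :
    u.axis r q < v.axis r q ↔
      u.j % 2 = 1 ∧ u.Encloses q v ∨ v.j % 2 = 0 ∧ v.Encloses q u := by
  rcases Nat.mod_two_eq_zero_or_one u.j with pu | pu <;>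
    rcases Nat.mod_two_eq_zero_or_one v.j with pv | pv
  · have := axis_add_depth pu hu
    have := axis_add_depth pv hv
    rw [← depth_lt_depth_iff (pv.trans pu.symm) hv.2 hu.2]
    omega
  · have := axis_add_depth pu hu
    have := axis_of_odd pv hv
    have := depth_add_depth_lt (by omega) hu.1 hv.1 hu.2 hv.2
    omega
  · have := axis_of_odd pu hu
    have := axis_add_depth pv hv
    have := depth_add_depth_lt (by omega) hu.1 hv.1 hu.2 hv.2
    have : u.Encloses q v := Or.inl (by omega)
    simp only [pu, this, true_and, true_or, iff_true]
    omega
  · have := axis_of_odd pu hu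
    have := axis_of_odd pv hv
    rw [← depth_lt_depth_iff (pu.trans pv.symm) hu.2 hv.2]
    omega

lemma meander_lt_meander_iff (hu : u.InRange r q) (hv : v.InRange r q) :
    u.meander r q < v.meander r q ↔
      u.k % 2 = 0 ∧ u.transpose.Encloses r v.transpose ∨
        v.k % 2 = 1 ∧ v.transpose.Encloses r u.transpose := by
  have swap : 2 * (q + 1) * (r + 1) = 2 * (r + 1) * (q + 1) := by ring
  rcases Nat.mod_two_eq_zero_or_one u.k with pu | pu <;>
    rcases Nat.mod_two_eq_zero_or_one v.k with pv | pv
  · have := meander_of_even pu hu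
    have := meander_of_even pv hv
    rw [← depth_lt_depth_iff (u := u.transpose) (pu.trans pv.symm) hu.1 hv.1]
    omega
  · have := meander_of_even pu hu
    have := meander_add_depth pv hv
    have ne : u.k % 2 ≠ v.k % 2 := by omega
    have := depth_add_depth_lt (u := u.transpose) (v := v.transpose) ne hu.2 hv.2 hu.1 hv.1
    have : u.transpose.Encloses r v.transpose := Or.inl ne
    simp only [pu, this, true_and, true_or, iff_true]
    omega
  · have := meander_add_depth pu hu
    have := meander_of_even pv hv
    have ne : u.k % 2 ≠ v.k % 2 := by omega
    have := depth_add_depth_lt (u := u.transpose) (v := v.transpose) ne hu.2 hv.2 hu.1 hv.1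
    omega
  · have := meander_add_depth pu hu
    have := meander_add_depth pv hv
    rw [← depth_lt_depth_iff (u := v.transpose) (pv.trans pu.symm) hv.1 hu.1]
    omega

lemma encloses_or_encloses (hu : u.k ≤ n) (hv : v.k ≤ n) (h : u ≠ v) :
    u.Encloses n v ∨ v.Encloses n u := by
  contrapose! h
  rcases u with ⟨_ | _, j, k⟩ <;> rcases v with ⟨_ | _, j', k'⟩ <;>
    simp only [Encloses, strandCoord, Label.mk.injEq, reduceCtorEq, true_and, false_and] at * <;>
    omega

lemma meander_injOn : Set.InjOn (meander r q) {u | u.InRange r q} := by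
  intro u hu v hv h
  by_contra hne
  have hne' : u.transpose ≠ v.transpose := fun e ↦ hne (congrArg transpose e)
  have := encloses_or_encloses (n := r) hu.1 hv.1 hne'
  have := meander_lt_meander_iff hu hv
  have := meander_lt_meander_iff hv hu
  grind

lemma star_inRange : star.InRange r q := ⟨Nat.zero_le r, Nat.zero_le q⟩

lemma meander_star : star.meander r q = 0 := by simp [meander, star, meanderPos]

lemma meander_pos (hu : u.InRange r q) (hs : u ≠ star) : 0 < u.meander r q :=
  Nat.pos_of_ne_zero fun h ↦ hs (meander_injOn hu star_inRange (h.trans meander_star.symm))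

lemma meander_lt (hu : u.InRange r q) : u.meander r q < 2 * (r + 1) * (q + 1) := by
  rcases Nat.mod_two_eq_zero_or_one u.k with h | h
  · have := depth_lt (u := u.transpose) hu.2 hu.1
    rw [meander_of_even h hu]
    linarith
  · have := meander_add_depth h hu
    omega

/-- The sign of a tag, `1` for `A` and `-1` for `B`. -/
def tagSign (u : Label) : ℤ :=
  match u.tag with
  | Tag.A => 1
  | Tag.B => -1

/-- `1` or `-1`, according to whether `v` lies on the inner or on the outer side of `u` on the
axis. -/
def side (q : ℕ) (u v : Label) : ℤ := if u.Encloses q v then 1 else -1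

lemma side_add_side_of_succ (hj : v.j = u.j + 1) (hc : v.strandCoord q = u.strandCoord q) :
    side q u w + side q v w =
      if u.j ≤ w.j ∧ (w.j ≤ v.j → u.strandCoord q < w.strandCoord q) then 2 else 0 := by
  unfold side Encloses
  split_ifs <;> omega

lemma side_sub_side_of_j_eq (hj : v.j = u.j) (hc : u.strandCoord q < v.strandCoord q) :
    side q u w - side q v w =
      if w.j = u.j ∧ u.strandCoord q < w.strandCoord q ∧ w.strandCoord q ≤ v.strandCoord q
      then 2 else 0 := by
  unfold side Encloses
  split_ifs <;> omega

lemma neg_one_pow_meander (hu : u.InRange r q) :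
    (-1 : ℤ) ^ u.meander r q = u.tagSign * (-1) ^ (u.j + u.k) := by
  have parity : u.meander r q % 2 = (u.j + u.k + if u.tag = Tag.A then 0 else 1) % 2 := by
    have hdepth : u.transpose.depth r % 2 = u.transpose.strandCoord r % 2 := by
      rw [depth, show 2 * r + 2 = 2 * (r + 1) by ring, mul_assoc, Nat.mul_add_mod]
    have hcoord : u.transpose.strandCoord r % 2 = (u.j + if u.tag = Tag.A then 0 else 1) % 2 := by
      have := hu.1
      rcases u with ⟨_ | _, j, k⟩ <;>
        simp only [transpose, strandCoord, if_true, reduceCtorEq, if_false] at * <;> omega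
    rcases Nat.mod_two_eq_zero_or_one u.k with h | h
    · have := meander_of_even h hu
      omega
    · have := meander_add_depth h hu
      rw [mul_assoc] at this
      omega
  rw [neg_one_pow_congr (n := u.j + u.k + if u.tag = Tag.A then 0 else 1)
    (by rw [Nat.even_iff, Nat.even_iff, parity]), pow_add, mul_comm, tagSign]
  cases u.tag <;> simp

lemma sign_axis_sub_axis (hu : u.InRange r q) (hv : v.InRange r q) (h : u ≠ v) :
    Int.sign ((u.axis r q : ℤ) - v.axis r q) = (-1) ^ u.j * side q u v := by
  have huv := axis_lt_axis_iff hu hv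
  have hvu := axis_lt_axis_iff hv hu
  have total := encloses_or_encloses hu.2 hv.2 h
  have inner (h : u.j % 2 ≠ v.j % 2) : u.Encloses q v ∧ v.Encloses q u :=
    ⟨Or.inl h, Or.inl h.symm⟩
  unfold side
  rcases Nat.mod_two_eq_zero_or_one u.j with p | p
  · rw [Even.neg_one_pow (Nat.even_iff.2 p), one_mul]
    split_ifs with he
    · exact Int.sign_eq_one_of_pos (by grind)
    · exact Int.sign_eq_neg_one_of_neg (by grind)
  · rw [Odd.neg_one_pow (Nat.odd_iff.2 p), neg_one_mul]
    split_ifs with he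
    · exact Int.sign_eq_neg_one_of_neg (by grind)
    · exact Int.sign_eq_one_of_pos (by grind)

/-- The signed side `(-1) ^ h₀(u) * sign (h₁(u) - h₁(v))`, which governs the jumps of the Morse
numbers and of the zero numbers, for meander positions `h₀` and axis positions `h₁`. -/
def turn (q : ℕ) (u v : Label) : ℤ := u.tagSign * (-1) ^ u.k * side q u v

lemma neg_one_pow_meander_mul_sign (hu : u.InRange r q) (hv : v.InRange r q) (h : u ≠ v) :
    (-1) ^ u.meander r q * Int.sign ((u.axis r q : ℤ) - v.axis r q) = turn q u v := by
  rw [sign_axis_sub_axis hu hv h, neg_one_pow_meander hu, turn, pow_add]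
  have : ((-1 : ℤ) ^ u.j) * (-1) ^ u.j = 1 := by rw [← mul_pow]; simp
  linear_combination u.tagSign * (-1) ^ u.k * side q u v * this

end Positions

section Numbers

/-- Closed form of the Morse numbers. The value at `⋆` is `-1`. -/
def morseIndex (u : Label) : ℤ :=
  match u.tag with
  | Tag.A => u.j + u.k - 1
  | Tag.B => u.j + u.k

/-- Closed form of the zero numbers. -/
def zeroNumber (u v : Label) : ℤ :=
  min (min (u.j + u.k - u.tagSign) (v.j + v.k - v.tagSign)) (min (u.j + v.k) (v.j + u.k))

lemma zeroNumber_self (u : Label) : zeroNumber u u = u.morseIndex := by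
  rcases u with ⟨_ | _, j, k⟩ <;> simp only [zeroNumber, morseIndex, tagSign] <;> omega

lemma zeroNumber_comm (u v : Label) : zeroNumber u v = zeroNumber v u := by
  unfold zeroNumber
  omega

end Numbers

section Steps

/-- Consecutive labels in an arm of the meander, from the outer end of the arm to the inner one. -/
inductive Inward (r : ℕ) : Label → Label → Prop
  | alongA {j k} (hj : j < r) : Inward r ⟨Tag.A, j, k⟩ ⟨Tag.A, j + 1, k⟩
  | cross {k} : Inward r ⟨Tag.A, r, k⟩ ⟨Tag.B, r, k⟩
  | alongB {j k} (hj : j < r) : Inward r ⟨Tag.B, j + 1, k⟩ ⟨Tag.B, j, k⟩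
  | link {k} : Inward r ⟨Tag.B, 0, k⟩ ⟨Tag.A, 0, k + 2⟩

/-- Consecutive labels on the meander: inward along the arm with even `k`, then over to the arm
with odd `k`, and outward along it. -/
inductive Step (r q : ℕ) : Label → Label → Prop
  | inward {u v} (h : Inward r u v) (hk : u.k % 2 = 0) : Step r q u v
  | turnBack {k l} (hkl : k + 1 = l ∧ l = q ∨ l + 1 = k ∧ k = q) (hk : k % 2 = 0) :
      Step r q ⟨Tag.B, 0, k⟩ ⟨Tag.B, 0, l⟩
  | outward {u v} (h : Inward r v u) (hk : u.k % 2 = 1) : Step r q u v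

variable {r q m : ℕ} {u v w : Label}

lemma Inward.depth_eq (h : Inward r u v) (hu : u.InRange r q) :
    v.transpose.depth r = u.transpose.depth r + 1 := by
  have hj := hu.1
  cases h <;> simp only [depth, transpose, strandCoord] at hj ⊢
  · ring
  · omega
  · omega
  · rw [Nat.add_div_right _ two_pos, Nat.mul_succ]
    omega

lemma Inward.mod_two_eq (h : Inward r u v) : u.k % 2 = v.k % 2 := by
  cases h <;> simp

lemma Step.meander_eq (h : Step r q u v) (hu : u.InRange r q) (hv : v.InRange r q) :
    v.meander r q = u.meander r q + 1 := by
  cases h with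
  | inward h hk =>
    rw [meander_of_even hk hu, meander_of_even (h.mod_two_eq ▸ hk) hv, h.depth_eq hu]
  | outward h hk =>
    have := meander_add_depth hk hu
    have := meander_add_depth (h.mod_two_eq.trans hk) hv
    have := h.depth_eq hv
    omega
  | @turnBack k l hkl hk =>
    have hl : l % 2 = 1 := by omega
    have hu' := meander_of_even hk hu
    have hv' := meander_add_depth hl hv
    obtain rfl : q = k / 2 + l / 2 + 1 := by omega
    simp only [depth, transpose, strandCoord] at hu' hv'
    rw [Nat.sub_zero] at hu' hv'
    linarith

lemma exists_step (hu : u.InRange r q) (hs : u ≠ star) : ∃ p, p.InRange r q ∧ Step r q p u := by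
  obtain ⟨t, j, k⟩ := u
  obtain ⟨hj, hk⟩ : j ≤ r ∧ k ≤ q := hu
  rcases Nat.mod_two_eq_zero_or_one k with pk | pk
  · cases t
    · rcases j with _ | j
      · obtain ⟨k, rfl⟩ : ∃ k', k = k' + 2 := ⟨k - 2, by
          have : k ≠ 0 := by rintro rfl; exact hs rfl
          omega⟩
        exact ⟨⟨Tag.B, 0, k⟩, ⟨hj, Nat.le_of_add_right_le hk⟩, .inward .link (by simpa using pk)⟩
      · exact ⟨⟨Tag.A, j, k⟩, ⟨Nat.le_of_succ_le hj, hk⟩, .inward (.alongA hj) pk⟩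
    · rcases hj.eq_or_lt with rfl | hj
      · exact ⟨⟨Tag.A, j, k⟩, ⟨le_rfl, hk⟩, .inward .cross pk⟩
      · exact ⟨⟨Tag.B, j + 1, k⟩, ⟨hj, hk⟩, .inward (.alongB hj) pk⟩
  · cases t
    · rcases hj.eq_or_lt with rfl | hj
      · exact ⟨⟨Tag.B, j, k⟩, ⟨le_rfl, hk⟩, .outward .cross pk⟩
      · exact ⟨⟨Tag.A, j + 1, k⟩, ⟨hj, hk⟩, .outward (.alongA hj) pk⟩
    · rcases j with _ | j
      · by_cases hk2 : k + 2 ≤ q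
        · exact ⟨⟨Tag.A, 0, k + 2⟩, ⟨hj, hk2⟩, .outward .link (by simpa using pk)⟩
        · rcases hk.eq_or_lt with rfl | hk
          · exact ⟨⟨Tag.B, 0, k - 1⟩, ⟨hj, Nat.sub_le k 1⟩, .turnBack (by omega) (by omega)⟩
          · exact ⟨⟨Tag.B, 0, k + 1⟩, ⟨hj, hk⟩, .turnBack (by omega) (by omega)⟩
      · exact ⟨⟨Tag.B, j, k⟩, ⟨Nat.le_of_succ_le hj, hk⟩, .outward (.alongB hj) pk⟩

lemma exists_meander_eq_of_le (hu : u.InRange r q) (hm : m ≤ u.meander r q) :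
    ∃ w : Label, w.InRange r q ∧ w.meander r q = m := by
  obtain ⟨d, hd⟩ := Nat.exists_eq_add_of_le hm
  induction d generalizing u with
  | zero => exact ⟨u, hu, hd⟩
  | succ d ih =>
    obtain ⟨p, hp, hstep⟩ := exists_step hu (by rintro rfl; rw [meander_star] at hd; omega)
    have := hstep.meander_eq hp hu
    exact ih hp (by omega) (by omega)

lemma Inward.morseIndex_sub (h : Inward r u v) (hu : u.InRange r q) (hv : v.InRange r q) :
    v.morseIndex - u.morseIndex = u.tagSign * side q u v ∧
    v.morseIndex - u.morseIndex = v.tagSign * side q v u := by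
  have huk := hu.2
  have hvk := hv.2
  unfold side Encloses
  cases h <;> simp only [morseIndex, tagSign, strandCoord, true_and] at huk hvk ⊢ <;>
    split_ifs <;> omega

lemma Step.morseIndex_eq (h : Step r q u v) (hu : u.InRange r q) (hv : v.InRange r q) :
    v.morseIndex = u.morseIndex + turn q v u := by
  unfold turn
  cases h with
  | inward h hk =>
    have := h.morseIndex_sub hu hv
    rw [Even.neg_one_pow (Nat.even_iff.2 (h.mod_two_eq ▸ hk))]
    linarith
  | outward h hk =>
    have := h.morseIndex_sub hv hu
    rw [Odd.neg_one_pow (Nat.odd_iff.2 (h.mod_two_eq.trans hk))]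
    linarith
  | @turnBack k l hkl hk =>
    rw [Odd.neg_one_pow (Nat.odd_iff.2 (show l % 2 = 1 by omega))]
    unfold side Encloses
    simp only [morseIndex, tagSign, strandCoord, true_and]
    split_ifs <;> omega

lemma zeroNumber_succ_sub {t : Tag} {j k : ℕ} (hk : k ≤ q) (hw : w.k ≤ q)
    (hne : ⟨t, j, k⟩ ≠ w) (hne' : ⟨t, j + 1, k⟩ ≠ w) :
    zeroNumber ⟨t, j + 1, k⟩ w - zeroNumber ⟨t, j, k⟩ w =
      if j ≤ w.j ∧ (w.j ≤ j + 1 → strandCoord q ⟨t, j, k⟩ < w.strandCoord q) then 1 else 0 := by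
  obtain ⟨t', a, b⟩ := w
  cases t <;> cases t' <;>
    simp only [ne_eq, Label.mk.injEq, reduceCtorEq, true_and, false_and, not_false_eq_true]
      at hw hne hne' <;>
    simp only [zeroNumber, tagSign, strandCoord] <;>
    split_ifs <;> omega

lemma zeroNumber_cross_sub {k : ℕ} (hk : k ≤ q) (hw : w.InRange r q) (hne : ⟨Tag.A, r, k⟩ ≠ w)
    (hne' : ⟨Tag.B, r, k⟩ ≠ w) :
    zeroNumber ⟨Tag.B, r, k⟩ w - zeroNumber ⟨Tag.A, r, k⟩ w =
      if w.j = r ∧ strandCoord q ⟨Tag.A, r, k⟩ < w.strandCoord q ∧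
        w.strandCoord q ≤ strandCoord q ⟨Tag.B, r, k⟩ then 1 else 0 := by
  obtain ⟨t, a, b⟩ := w
  obtain ⟨ha, hb⟩ : a ≤ r ∧ b ≤ q := hw
  cases t <;>
    simp only [ne_eq, Label.mk.injEq, reduceCtorEq, true_and, false_and, not_false_eq_true]
      at hne hne' <;>
    simp only [zeroNumber, tagSign, strandCoord] <;>
    split_ifs <;> omega

lemma zeroNumber_link_sub {k : ℕ} (hk : k + 2 ≤ q) (hw : w.k ≤ q) (hne : ⟨Tag.B, 0, k⟩ ≠ w)
    (hne' : ⟨Tag.A, 0, k + 2⟩ ≠ w) :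
    zeroNumber ⟨Tag.A, 0, k + 2⟩ w - zeroNumber ⟨Tag.B, 0, k⟩ w =
      if w.j = 0 ∧ strandCoord q ⟨Tag.A, 0, k + 2⟩ < w.strandCoord q ∧
        w.strandCoord q ≤ strandCoord q ⟨Tag.B, 0, k⟩ then 1 else 0 := by
  obtain ⟨t, a, b⟩ := w
  cases t <;>
    simp only [ne_eq, Label.mk.injEq, reduceCtorEq, true_and, false_and, not_false_eq_true]
      at hw hne hne' <;>
    simp only [zeroNumber, tagSign, strandCoord] <;>
    split_ifs <;> omega

lemma Inward.two_mul_zeroNumber_sub (h : Inward r u v) (hu : u.InRange r q) (hv : v.InRange r q)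
    (hw : w.InRange r q) (huw : u ≠ w) (hvw : v ≠ w) :
    2 * (zeroNumber v w - zeroNumber u w) =
      v.tagSign * side q v w + u.tagSign * side q u w := by
  cases h with
  | @alongA j k =>
    have := side_add_side_of_succ (u := ⟨Tag.A, j, k⟩) (v := ⟨Tag.A, j + 1, k⟩) (w := w) (q := q)
      rfl rfl
    rw [zeroNumber_succ_sub hu.2 hw.2 huw hvw]
    simp only [tagSign]
    split_ifs at this ⊢ <;> linarith
  | @alongB j k =>
    have := side_add_side_of_succ (u := ⟨Tag.B, j, k⟩) (v := ⟨Tag.B, j + 1, k⟩) (w := w) (q := q)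
      rfl rfl
    rw [← neg_sub, zeroNumber_succ_sub hu.2 hw.2 hvw huw]
    simp only [tagSign]
    split_ifs at this ⊢ <;> linarith
  | @cross k =>
    have hk : k ≤ q := hu.2
    have := side_sub_side_of_j_eq (u := ⟨Tag.A, r, k⟩) (v := ⟨Tag.B, r, k⟩) (w := w) (q := q)
      rfl (by simp only [strandCoord]; omega)
    rw [zeroNumber_cross_sub hk hw huw hvw]
    simp only [tagSign]
    split_ifs at this ⊢ <;> linarith
  | @link k =>
    have hk : k + 2 ≤ q := hv.2
    have := side_sub_side_of_j_eq (u := ⟨Tag.A, 0, k + 2⟩) (v := ⟨Tag.B, 0, k⟩) (w := w) (q := q)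
      rfl (by simp only [strandCoord]; omega)
    rw [zeroNumber_link_sub hk hw.2 huw hvw]
    simp only [tagSign]
    split_ifs at this ⊢ <;> linarith

lemma zeroNumber_turnBack (hw : w.k ≤ q + 1) (hne : ⟨Tag.B, 0, q⟩ ≠ w)
    (hne' : ⟨Tag.B, 0, q + 1⟩ ≠ w) :
    zeroNumber ⟨Tag.B, 0, q + 1⟩ w = zeroNumber ⟨Tag.B, 0, q⟩ w := by
  obtain ⟨_ | _, a, b⟩ := w <;>
    simp only [ne_eq, Label.mk.injEq, reduceCtorEq, true_and, false_and, not_false_eq_true]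
      at hw hne hne' <;>
    simp only [zeroNumber, tagSign] <;>
    omega

lemma side_turnBack (hw : w.k ≤ q + 1) (hne : ⟨Tag.B, 0, q⟩ ≠ w) (hne' : ⟨Tag.B, 0, q + 1⟩ ≠ w) :
    side (q + 1) ⟨Tag.B, 0, q + 1⟩ w = side (q + 1) ⟨Tag.B, 0, q⟩ w := by
  unfold side Encloses
  obtain ⟨_ | _, a, b⟩ := w <;>
    simp only [ne_eq, Label.mk.injEq, reduceCtorEq, true_and, false_and, not_false_eq_true]
      at hw hne hne' <;>
    simp only [strandCoord] <;>
    split_ifs <;> omega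

lemma Step.two_mul_zeroNumber_sub (h : Step r q u v) (hu : u.InRange r q) (hv : v.InRange r q)
    (hw : w.InRange r q) (huw : u ≠ w) (hvw : v ≠ w) :
    2 * (zeroNumber v w - zeroNumber u w) = turn q v w + turn q u w := by
  unfold turn
  cases h with
  | inward h hk =>
    have := h.two_mul_zeroNumber_sub hu hv hw huw hvw
    rw [Even.neg_one_pow (Nat.even_iff.2 (h.mod_two_eq ▸ hk)), Even.neg_one_pow (Nat.even_iff.2 hk)]
    linarith
  | outward h hk =>
    have := h.two_mul_zeroNumber_sub hv hu hw hvw huw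
    rw [Odd.neg_one_pow (Nat.odd_iff.2 (h.mod_two_eq.trans hk)), Odd.neg_one_pow (Nat.odd_iff.2 hk)]
    linarith
  | @turnBack k l hkl hk =>
    rw [Odd.neg_one_pow (Nat.odd_iff.2 (show l % 2 = 1 by omega)),
      Even.neg_one_pow (Nat.even_iff.2 hk)]
    rcases hkl with ⟨rfl, rfl⟩ | ⟨rfl, rfl⟩
    · rw [zeroNumber_turnBack hw.2 huw hvw, side_turnBack hw.2 huw hvw]
      simp only [tagSign]
      ring
    · rw [zeroNumber_turnBack hw.2 hvw huw, side_turnBack hw.2 hvw huw]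
      simp only [tagSign]
      ring

lemma Inward.zeroNumber_eq_min (h : Inward r u v) :
    zeroNumber u v = min u.morseIndex v.morseIndex := by
  cases h <;> simp only [zeroNumber, morseIndex, tagSign] <;> omega

lemma Step.zeroNumber_eq_min (h : Step r q u v) :
    zeroNumber v u = min u.morseIndex v.morseIndex := by
  cases h with
  | inward h => rw [zeroNumber_comm, h.zeroNumber_eq_min]
  | outward h => rw [h.zeroNumber_eq_min, min_comm]
  | turnBack =>
    simp only [zeroNumber, morseIndex, tagSign]
    omega

lemma Step.eq_of_star (h : Step r q star u) : u = ⟨Tag.A, 1, 0⟩ ∨ r = 0 ∧ u = ⟨Tag.B, 0, 0⟩ := by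
  generalize hs : star = s at h
  unfold star at hs
  cases h with
  | inward h => cases h <;> grind
  | outward h hk => subst hs; cases hk
  | turnBack => cases hs

lemma Step.morseIndex_of_star (h : Step r q star u) : u.morseIndex = 0 := by
  obtain rfl | ⟨-, rfl⟩ := h.eq_of_star <;> simp [morseIndex]

lemma Step.zeroNumber_of_star (h : Step r q star u) (hw : w.j ≤ r) (hs : w ≠ star) :
    zeroNumber u w = 0 := by
  obtain ⟨_ | _, a, b⟩ := w <;> obtain rfl | ⟨rfl, rfl⟩ := h.eq_of_star <;>
    simp only [zeroNumber, tagSign, star, ne_eq, Label.mk.injEq, true_and, reduceCtorEq, false_and,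
      not_false_eq_true] at hw hs ⊢ <;>
    omega

end Steps

section Realization

variable {r q : ℕ} {u w : Label} {σ : Equiv.Perm ℕ}

lemma apply_eq_of_odd (hσ : SigmaRQ r q σ) {p s i h : ℕ} (hi : i ≤ r) (hh : h ≤ q)
    (hp : p = 2 * ((q + 1) * i + h) + 1) (hs : s = 2 * (i + (r + 1) * h) + 1) : σ p = s := by
  rw [hp, hs, hσ.2.1 i h hi hh]

lemma apply_eq_of_even (hσ : SigmaRQ r q σ) {p s i i' h h' : ℕ} (hi : i + i' = r)
    (hh : h + h' = q) (hih : i + h ≠ 0) (hp : p = 2 * ((q + 1) * i' + h' + 1))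
    (hs : s = 2 * (i + (r + 1) * h)) : σ p = s := by
  obtain rfl : i' = r - i := by omega
  obtain rfl : h' = q - h := by omega
  rw [hp, hs, hσ.2.2 i h (by omega) (by omega) (by omega)]

lemma apply_axis (hσ : SigmaRQ r q σ) (hu : u.InRange r q) (hs : u ≠ star) :
    σ (u.axis r q) = u.meander r q := by
  obtain ⟨t, j, k⟩ := u
  obtain ⟨r', rfl⟩ := Nat.exists_eq_add_of_le hu.1
  obtain ⟨q', rfl⟩ := Nat.exists_eq_add_of_le hu.2
  have coordB (a b : ℕ) : 2 * (a + b) + 1 - a = a + 2 * b + 1 := by omega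
  have odd_div (i : ℕ) : (2 * i + 1) / 2 = i := by omega
  have even_div (i : ℕ) : 2 * i / 2 = i := by omega
  rcases Nat.even_or_odd' j with ⟨i, rfl | rfl⟩ <;> rcases Nat.even_or_odd' k with ⟨h, rfl | rfl⟩
  · have ha := axis_add_depth (Nat.mul_mod_right 2 i) hu
    have hm := meander_of_even (Nat.mul_mod_right 2 h) hu
    cases t <;> simp only [depth, transpose, strandCoord, coordB, even_div] at ha hm
    · have : i + h ≠ 0 := fun h0 ↦ hs (by obtain ⟨rfl, rfl⟩ := Nat.add_eq_zero_iff.1 h0; rfl)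
      apply apply_eq_of_even hσ (i := i) (i' := i + r') (h := h) (h' := h + q') <;> grind
    · apply apply_eq_of_odd hσ (i := i + r') (h := h) <;> grind
  · have ha := axis_add_depth (Nat.mul_mod_right 2 i) hu
    have hm := meander_add_depth (Nat.mul_add_mod 2 h 1) hu
    cases t <;> simp only [depth, transpose, strandCoord, coordB, even_div, odd_div] at ha hm
    · apply apply_eq_of_odd hσ (i := i + r') (h := h + 1 + q') <;> grind
    · apply apply_eq_of_even hσ (i := i) (i' := i + r') (h := h + 1 + q') (h' := h) <;> grind
  · have ha := axis_of_odd (Nat.mul_add_mod 2 i 1) hu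
    have hm := meander_of_even (Nat.mul_mod_right 2 h) hu
    cases t <;> simp only [depth, transpose, strandCoord, coordB, even_div, odd_div] at ha hm
    · apply apply_eq_of_odd hσ (i := i) (h := h) <;> grind
    · apply apply_eq_of_even hσ (i := i + 1 + r') (i' := i) (h := h) (h' := h + q') <;> grind
  · have ha := axis_of_odd (Nat.mul_add_mod 2 i 1) hu
    have hm := meander_add_depth (Nat.mul_add_mod 2 h 1) hu
    cases t <;> simp only [depth, transpose, strandCoord, coordB, odd_div] at ha hm
    · apply apply_eq_of_even hσ (i := i + 1 + r') (i' := i) (h := h + 1 + q') (h' := h) <;> grind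
    · apply apply_eq_of_odd hσ (i := i) (h := h + 1 + q') <;> grind

lemma symm_meander (hσ : SigmaRQ r q σ) (hu : u.InRange r q) (hs : u ≠ star) :
    σ.symm (u.meander r q) = u.axis r q := by
  rw [← apply_axis hσ hu hs, σ.symm_apply_apply]

lemma morse_meander (hσ : SigmaRQ r q σ) (hu : u.InRange r q) (hs : u ≠ star) :
    morse σ (u.meander r q) = u.morseIndex := by
  induction hm : u.meander r q using Nat.strong_induction_on generalizing u with
  | _ m ih =>
    subst hm
    obtain ⟨p, hp, hstep⟩ := exists_step hu hs
    have hpu := hstep.meander_eq hp hu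
    by_cases hps : p = star
    · subst hps
      rw [meander_star] at hpu
      rw [hpu, hstep.morseIndex_of_star, morse]
    · have hpos := meander_pos hp hps
      have hne : u ≠ p := by rintro rfl; omega
      obtain ⟨i, hi⟩ : ∃ i, p.meander r q = i + 1 := ⟨_, (Nat.sub_add_cancel hpos).symm⟩
      rw [hstep.morseIndex_eq hp hu, ← ih _ (by omega) hp hps rfl,
        ← neg_one_pow_meander_mul_sign hu hp hne, ← symm_meander hσ hu hs,
        ← symm_meander hσ hp hps, hpu, hi, morse]

lemma zfun_meander (hσ : SigmaRQ r q σ) (hu : u.InRange r q) (hus : u ≠ star)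
    (hw : w.InRange r q) (hws : w ≠ star) :
    zfun σ (u.meander r q) (w.meander r q) = zeroNumber u w := by
  induction hm : u.meander r q using Nat.strong_induction_on generalizing u with
  | _ m ih =>
    subst hm
    by_cases huw : u = w
    · subst huw
      obtain ⟨i, hi⟩ : ∃ i, u.meander r q = i + 1 :=
        ⟨_, (Nat.sub_add_cancel (meander_pos hu hus)).symm⟩
      rw [zeroNumber_self, ← morse_meander hσ hu hus, zfun, hi]
      cases i <;> simp [zrec, morse]
    obtain ⟨p, hp, hstep⟩ := exists_step hu hus
    have hpu := hstep.meander_eq hp hu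
    by_cases hps : p = star
    · subst hps
      rw [meander_star] at hpu
      rw [hpu, zfun, zrec, hstep.zeroNumber_of_star hw.1 hws]
    obtain ⟨i, hi⟩ : ∃ i, p.meander r q = i + 1 :=
      ⟨_, (Nat.sub_add_cancel (meander_pos hp hps)).symm⟩
    have hnw : i + 2 ≠ w.meander r q := fun h ↦
      huw (meander_injOn hu hw (by rw [hpu, hi, h]))
    rw [zfun, hpu, hi, zrec, if_neg hnw]
    split_ifs with hpw
    · obtain rfl : p = w := meander_injOn hp hw (hi.trans hpw)
      rw [← hpu, morse_meander hσ hp hps, morse_meander hσ hu hus, hstep.zeroNumber_eq_min]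
    · have hpw' : p ≠ w := by rintro rfl; exact hpw hi.symm
      have key := hstep.two_mul_zeroNumber_sub hp hu hw hpw' huw
      rw [← neg_one_pow_meander_mul_sign hu hw huw, ← neg_one_pow_meander_mul_sign hp hw hpw',
        ← symm_meander hσ hu hus, ← symm_meander hσ hp hps, ← symm_meander hσ hw hws,
        hpu, hi] at key
      rw [← hi, ← zfun, ih _ (by omega) hp hps rfl, hi]
      rw [show (-1 : ℤ) ^ (i + 2) * (Int.sign (σ.symm (i + 2) - σ.symm (w.meander r q)) -
          Int.sign (σ.symm (i + 1) - σ.symm (w.meander r q))) =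
          2 * (zeroNumber u w - zeroNumber p w) by rw [key]; ring,
        Int.mul_ediv_cancel_left _ two_ne_zero, add_sub_cancel]

end Realization

section Edges

variable {r q : ℕ} {u v w : Label} {σ : Equiv.Perm ℕ}

/-- Closed form of the edges `u → v` of the pointed connection digraph. Since `⋆` has index `-1`,
the edges into `⋆` need no separate clause. -/
def Edge (u v : Label) : Prop := u.morseIndex = v.morseIndex + 1 ∧ (u.j = v.j ∨ u.k = v.k)

/-- The label `w` blocks the connection between `u` and `v`. -/
def Blocks (r q : ℕ) (w u v : Label) : Prop :=
  min (u.meander r q) (v.meander r q) < w.meander r q ∧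
    w.meander r q < max (u.meander r q) (v.meander r q) ∧
    zeroNumber u w = zeroNumber w v ∧ zeroNumber w v = zeroNumber u v

lemma Blocks.symm (h : Blocks r q w u v) : Blocks r q w v u := by
  obtain ⟨h₁, h₂, h₃, h₄⟩ := h
  refine ⟨min_comm (u.meander r q) _ ▸ h₁, max_comm (u.meander r q) _ ▸ h₂, ?_, ?_⟩
  · rw [zeroNumber_comm, ← h₃, zeroNumber_comm]
  · rw [zeroNumber_comm, h₃, h₄, zeroNumber_comm]

lemma between_iff_encloses (hu : u.InRange r q) (hv : v.InRange r q) (hw : w.InRange r q) :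
    min (u.meander r q) (v.meander r q) < w.meander r q ∧
        w.meander r q < max (u.meander r q) (v.meander r q) ↔
      u.k % 2 ≠ v.k % 2 ∧ u.transpose.Encloses r w.transpose ∧ v.transpose.Encloses r w.transpose ∨
      u.k % 2 = w.k % 2 ∧ u.transpose.Encloses r w.transpose ∧ w.transpose.Encloses r v.transpose ∨
      v.k % 2 = w.k % 2 ∧ v.transpose.Encloses r w.transpose ∧
        w.transpose.Encloses r u.transpose := by
  have asymm {x y : Label} (hx : x.transpose.Encloses r y.transpose) (h : x.k % 2 = y.k % 2) :
      ¬ y.transpose.Encloses r x.transpose := by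
    simp only [Encloses, transpose] at hx ⊢
    omega
  rw [min_lt_iff, lt_max_iff, meander_lt_meander_iff hu hw, meander_lt_meander_iff hv hw,
    meander_lt_meander_iff hw hu, meander_lt_meander_iff hw hv]
  have := Nat.mod_two_eq_zero_or_one u.k
  have := Nat.mod_two_eq_zero_or_one v.k
  have := Nat.mod_two_eq_zero_or_one w.k
  grind

lemma blocks_of_lt_of_lt (hu : u.InRange r q) (hv : v.InRange r q) (hj : u.j < v.j)
    (hk : v.k < u.k) : Blocks r q ⟨Tag.B, u.j, v.k⟩ u v := by
  have hw : InRange r q ⟨Tag.B, u.j, v.k⟩ := ⟨hu.1, hv.2⟩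
  have hv_w : v.transpose.Encloses r (transpose ⟨Tag.B, u.j, v.k⟩) := by
    have := hv.1
    refine .inr (.inr ⟨rfl, ?_⟩)
    rcases v with ⟨_ | _, j', k'⟩ <;> simp only [transpose, strandCoord] at * <;> omega
  obtain ⟨h₁, h₂⟩ := (between_iff_encloses hu hv hw).2 (.inr (.inr ⟨rfl, hv_w, .inr (.inl hk)⟩))
  refine ⟨h₁, h₂, ?_, ?_⟩ <;>
    rcases u with ⟨_ | _, j, k⟩ <;> rcases v with ⟨_ | _, j', k'⟩ <;>
    simp only [zeroNumber, tagSign] at * <;> omega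

lemma blocks_B_B_A {j k : ℕ} (hj : j + 1 ≤ r) (hk : k + 1 ≤ q) :
    Blocks r q ⟨Tag.B, j + 1, k + 1⟩ ⟨Tag.B, j, k⟩ ⟨Tag.A, j + 1, k + 1⟩ := by
  have hu : InRange r q ⟨Tag.B, j, k⟩ := ⟨Nat.le_of_succ_le hj, Nat.le_of_succ_le hk⟩
  have hv : InRange r q ⟨Tag.A, j + 1, k + 1⟩ := ⟨hj, hk⟩
  have hw : InRange r q ⟨Tag.B, j + 1, k + 1⟩ := ⟨hj, hk⟩
  have hv_w : (transpose ⟨Tag.A, j + 1, k + 1⟩).Encloses r (transpose ⟨Tag.B, j + 1, k + 1⟩) := by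
    refine .inr (.inr ⟨rfl, ?_⟩)
    simp only [transpose, strandCoord]
    omega
  have hw_u : (transpose ⟨Tag.B, j + 1, k + 1⟩).Encloses r (transpose ⟨Tag.B, j, k⟩) :=
    .inl (by simp only [transpose]; omega)
  obtain ⟨h₁, h₂⟩ := (between_iff_encloses hu hv hw).2 (.inr (.inr ⟨rfl, hv_w, hw_u⟩))
  refine ⟨h₁, h₂, ?_, ?_⟩ <;> simp only [zeroNumber, tagSign] <;> omega

lemma Blocks.ne_star (h : Blocks r q w u v) : w ≠ star := by
  rintro rfl
  exact absurd h.1 (by simp [meander_star])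

lemma exists_blocks (hu : u.InRange r q) (hv : v.InRange r q)
    (h : u.morseIndex = v.morseIndex + 1) (hj : u.j ≠ v.j) (hk : u.k ≠ v.k) :
    ∃ w : Label, w.InRange r q ∧ Blocks r q w u v := by
  rcases lt_or_gt_of_ne hj with hj | hj <;> rcases lt_or_gt_of_ne hk with hk | hk
  · rcases u with ⟨_ | _, j, k⟩ <;> rcases v with ⟨_ | _, j', k'⟩ <;>
      simp only [morseIndex] at h hj hk <;> omega
  · exact ⟨⟨Tag.B, u.j, v.k⟩, ⟨hu.1, hv.2⟩, blocks_of_lt_of_lt hu hv hj hk⟩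
  · exact ⟨⟨Tag.B, v.j, u.k⟩, ⟨hv.1, hu.2⟩, (blocks_of_lt_of_lt hv hu hj hk).symm⟩
  · obtain ⟨j, k, rfl, rfl⟩ : ∃ j k, u = ⟨Tag.A, j + 1, k + 1⟩ ∧ v = ⟨Tag.B, j, k⟩ := by
      refine ⟨v.j, v.k, ?_⟩
      rcases u with ⟨_ | _, j, k⟩ <;> rcases v with ⟨_ | _, j', k'⟩ <;>
        simp only [morseIndex, Label.mk.injEq, reduceCtorEq, true_and, and_true, false_and]
          at h hj hk ⊢ <;> omega
    exact ⟨⟨Tag.B, j + 1, k + 1⟩, hu, (blocks_B_B_A hu.1 hu.2).symm⟩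

lemma Edge.zeroNumber_eq (h : Edge u v) : zeroNumber u v = v.morseIndex := by
  obtain ⟨h, hjk⟩ := h
  rcases u with ⟨_ | _, j, k⟩ <;> rcases v with ⟨_ | _, j', k'⟩ <;>
    simp only [zeroNumber, morseIndex, tagSign] at * <;> omega

lemma Edge.not_blocks (h : Edge u v) (hu : u.InRange r q) (hv : v.InRange r q)
    (hw : w.InRange r q) : ¬ Blocks r q w u v := by
  rintro ⟨hlt, hgt, hz, hz'⟩
  have hencl := (between_iff_encloses hu hv hw).1 ⟨hlt, hgt⟩
  have hwv : zeroNumber w v = v.morseIndex := hz'.trans h.zeroNumber_eq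
  have huw : zeroNumber u w = v.morseIndex := hz.trans hwv
  obtain ⟨-, hwv_le⟩ := by simpa only [zeroNumber, le_min_iff] using hwv.ge
  have huw_le := by simpa only [zeroNumber, le_min_iff] using huw.ge
  have huw_ge := by simpa only [zeroNumber, min_le_iff] using huw.le
  obtain ⟨hmorse, hjk⟩ := h
  clear hlt hgt hz hz' hwv huw
  obtain ⟨hwj, -⟩ := hw
  unfold Encloses at hencl
  rcases u with ⟨_ | _, j, k⟩ <;> rcases v with ⟨_ | _, j', k'⟩ <;>
    rcases w with ⟨_ | _, a, b⟩ <;>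
    simp only [morseIndex, tagSign, transpose, strandCoord] at * <;>
    omega

lemma hasEdge_meander_iff (hσ : SigmaRQ r q σ) (hu : u.InRange r q) (hv : v.InRange r q)
    (hus : u ≠ star) (hvs : v ≠ star) :
    hasEdge (2 * (r + 1) * (q + 1) - 1) σ (u.meander r q) (v.meander r q) ↔ Edge u v := by
  have hu_pos := meander_pos hu hus
  have hv_pos := meander_pos hv hvs
  rw [hasEdge, morse_meander hσ hu hus, morse_meander hσ hv hvs, zfun_meander hσ hu hus hv hvs]
  constructor
  · rintro ⟨-, -, -, -, hmorse, hblock⟩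
    refine ⟨hmorse, ?_⟩
    by_contra! hne
    obtain ⟨w, hw, hwb⟩ := exists_blocks hu hv hmorse hne.1 hne.2
    obtain ⟨hlt, hgt, hz⟩ := id hwb
    refine hblock ⟨w.meander r q, hlt, hgt, ?_⟩
    rwa [zfun_meander hσ hu hus hw hwb.ne_star, zfun_meander hσ hw hwb.ne_star hv hvs]
  · intro h
    refine ⟨hu_pos, Nat.le_sub_one_of_lt (meander_lt hu), hv_pos,
      Nat.le_sub_one_of_lt (meander_lt hv), h.1, ?_⟩
    rintro ⟨n, hlt, hgt, hz⟩
    obtain ⟨w, hw, rfl⟩ : ∃ w : Label, w.InRange r q ∧ w.meander r q = n := by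
      rcases lt_max_iff.1 hgt with h | h
      · exact exists_meander_eq_of_le hu h.le
      · exact exists_meander_eq_of_le hv h.le
    have hws : w ≠ star := by
      rintro rfl
      rw [meander_star] at hlt
      omega
    rw [zfun_meander hσ hu hus hw hws, zfun_meander hσ hw hws hv hvs] at hz
    exact h.not_blocks hu hv hw ⟨hlt, hgt, hz⟩

lemma not_edge_star_left : ¬ Edge star v := by
  rcases v with ⟨_ | _, j, k⟩ <;> simp only [Edge, morseIndex, star] <;> omega

lemma edge_star_right_iff : Edge u star ↔ u.morseIndex = 0 := by
  rcases u with ⟨_ | _, j, k⟩ <;> simp only [Edge, morseIndex, star] <;> omega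

lemma pEdge_iff (hσ : SigmaRQ r q σ) (hu : u.InRange r q) (hv : v.InRange r q) :
    PEdge r q σ u.tag u.j u.k v.tag v.j v.k ↔ Edge u v := by
  have isStar_iff (x : Label) : IsStar x.tag x.j x.k ↔ x = star := by
    rw [IsStar, star, Label.mk.injEq]
  change (_ ∧ _ ∧ hasEdge _ σ (σ (u.axis r q)) (σ (v.axis r q)) ∨ _ ∧ _ ∧
    morse σ (σ (u.axis r q)) = 0) ↔ _
  rw [isStar_iff, isStar_iff]
  by_cases hus : u = star
  · subst hus
    simp only [not_true_eq_false, false_and, or_false, false_iff]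
    exact fun h ↦ not_edge_star_left h
  by_cases hvs : v = star
  · subst hvs
    rw [edge_star_right_iff, apply_axis hσ hu hus, morse_meander hσ hu hus]
    simp [hus]
  · rw [apply_axis hσ hu hus, apply_axis hσ hv hvs, hasEdge_meander_iff hσ hu hv hus hvs]
    simp [hus, hvs]

/-- The involution `R : A^j_k ↔ B^{r-j}_{q-k}`. -/
def reversor (r q : ℕ) (u : Label) : Label := ⟨tagSwap u.tag, r - u.j, q - u.k⟩

lemma morseIndex_reversor (hu : u.InRange r q) :
    (u.reversor r q).morseIndex = r + q - 1 - u.morseIndex := by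
  obtain ⟨t, j, k⟩ := u
  obtain ⟨hj, hk⟩ : j ≤ r ∧ k ≤ q := hu
  cases t <;> simp only [reversor, tagSwap, morseIndex] <;> omega

lemma InRange.reversor : (u.reversor r q).InRange r q := ⟨Nat.sub_le r u.j, Nat.sub_le q u.k⟩

lemma edge_reversor_iff (hu : u.InRange r q) (hv : v.InRange r q) :
    Edge (v.reversor r q) (u.reversor r q) ↔ Edge u v := by
  have hj : r - v.j = r - u.j ↔ u.j = v.j := by have := hu.1; have := hv.1; omega
  have hk : q - v.k = q - u.k ↔ u.k = v.k := by have := hu.2; have := hv.2; omega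
  rw [Edge, Edge, morseIndex_reversor hu, morseIndex_reversor hv, reversor, reversor, hj, hk]
  omega

end Edges

end Label

end ThreeNose

/-- time reversibility of the pointed connection graph: the
involution `R : A^j_k ↔ B^{r-j}_{q-k}` reverses all edges. -/
theorem stmt_10 (r q : ℕ) (hr : 1 ≤ r) (hq : 1 ≤ q) (hrq : 1 < r*q)
    (σ : Equiv.Perm ℕ) (hσ : SigmaRQ r q σ) :
    ∀ (L L' : Tag) (j k j' k' : ℕ), j ≤ r → k ≤ q → j' ≤ r → k' ≤ q →
      (PEdge r q σ L j k L' j' k' ↔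
        PEdge r q σ (tagSwap L') (r-j') (q-k') (tagSwap L) (r-j) (q-k)) := by
  intro L L' j k j' k' hj hk hj' hk'
  let u : ThreeNose.Label := ⟨L, j, k⟩
  let v : ThreeNose.Label := ⟨L', j', k'⟩
  have hu : u.InRange r q := ⟨hj, hk⟩
  have hv : v.InRange r q := ⟨hj', hk'⟩
  open ThreeNose.Label in
  exact (pEdge_iff hσ hu hv).trans <| (edge_reversor_iff hu hv).symm.trans
    (pEdge_iff hσ (InRange.reversor (u := v)) (InRange.reversor (u := u))).symm
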